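/- Correctness of the QBF reduction: let Q_k x_k … Q₁ x₁ ψ be a fully quantified Boolean formula with Q_i ∈ {∀,∃} and ψ a propositional formula mentioning negation only in front of variables. Let T and W be two distinct standard names and f_i, f'_i (i ∈ {1,…,k}) pairwise distinct function terms. Define the translation ∗ by: x_i∗ = (f_i ≈ T); (¬x_i)∗ = (f_i ≉ T) if Q_i = ∀ and (f'_i ≈ T) if Q_i = ∃; (ψ₁ ∨ ψ₂)∗ = ψ₁∗ ∨ ψ₂∗; (ψ₁ ∧ ψ₂)∗ = ψ₁∗ ∧ ψ₂∗. For Q_i = ∀ let F_i = {f_i} and N_i = the set of all standard names distinct from W; for Q_i = ∃ let F_i = {f_i, f'_i} and N_i = {T}. Then the quantified Boolean formula evaluates to TRUE if and only if: for some t_k ∈ F_k, for all n_k ∈ N_k, …, for some t₁ ∈ F₁, for all n₁ ∈ N₁, {t₁ ≈ n₁,…,t_k ≈ n_k} ⊨ˢ ψ∗. -/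

import Mathlib

/-! ## Limited belief: basic syntax and semantics (Schwering 2017, quantifier-free). -/

/-- Standard names (a countably infinite supply). -/
abbrev Name := ℕ

/-- Function terms `f(n₁,…,n_j)`: a function symbol applied to standard names. -/
structure FnTerm where
  sym : ℕ
  args : List Name
deriving DecidableEq, Inhabited

/-- Literals `t ≈ n` (pos) and `t ≉ n` (neg). -/
inductive Lit where
  | pos (t : FnTerm) (n : Name)
  | neg (t : FnTerm) (n : Name)
deriving DecidableEq

instance : Inhabited Lit := ⟨.pos default 0⟩

/-- The left-hand side (function term) of a literal. -/
def Lit.lhs : Lit → FnTerm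
  | .pos t _ => t
  | .neg t _ => t

/-- The right-hand side (standard name) of a literal. -/
def Lit.rhs : Lit → Name
  | .pos _ n => n
  | .neg _ n => n

/-- The negation `¬ℓ` of a literal. -/
def Lit.negate : Lit → Lit
  | .pos t n => .neg t n
  | .neg t n => .pos t n

/-- Names occurring in a literal. -/
def Lit.names (ℓ : Lit) : Finset Name := insert ℓ.rhs ℓ.lhs.args.toFinset

/-- Two literals are complementary iff they are of the form `t ≈ n` and `t ≉ n`,
or of the form `t ≈ n` and `t ≈ n'` for distinct `n, n'`. -/
def Lit.complementary : Lit → Lit → Bool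
  | .pos t n, .neg t' n' => t == t' && n == n'
  | .neg t n, .pos t' n' => t == t' && n == n'
  | .pos t n, .pos t' n' => t == t' && n != n'
  | .neg _ _, .neg _ _ => false

/-- A clause is a (finite) set of literals. -/
abbrev Clause := Finset Lit

/-- Unit propagation of clause `c` with literal `ℓ`: remove from `c` all
literals complementary to `ℓ`. -/
def Clause.prop (c : Clause) (ℓ : Lit) : Clause :=
  c.filter (fun ℓ' => Lit.complementary ℓ' ℓ = false)

/-- `c₁` subsumes `c₂` iff for every `t ≈ n ∈ c₁`, `t ≈ n ∈ c₂` or `t ≉ n' ∈ c₂`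
for some `n' ≠ n`, and for every `t ≉ n ∈ c₁`, `t ≉ n ∈ c₂`. -/
def Clause.subsumes (c₁ c₂ : Clause) : Prop :=
  (∀ t n, Lit.pos t n ∈ c₁ → Lit.pos t n ∈ c₂ ∨ ∃ n', n' ≠ n ∧ Lit.neg t n' ∈ c₂) ∧
  (∀ t n, Lit.neg t n ∈ c₁ → Lit.neg t n ∈ c₂)

/-- `UP s`: the closure of the set of clauses `s` under unit propagation and
subsumption.  `UP s c` means `c ∈ UP(s)`. -/
inductive UP (s : Set Clause) : Clause → Prop
  | mem {c : Clause} : c ∈ s → UP s c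
  | unit {c : Clause} {ℓ : Lit} : UP s {ℓ} → UP s c → UP s (c.prop ℓ)
  | sub {c₁ c₂ : Clause} : UP s c₁ → c₁.subsumes c₂ → UP s c₂

/-- Objective formulas: literals (`atom` is `t ≈ n`, `not atom` is `t ≉ n`),
negation and disjunction. -/
inductive Form where
  | atom (t : FnTerm) (n : Name)
  | not (φ : Form)
  | or (φ ψ : Form)
deriving DecidableEq

/-- `α ∧ β` abbreviates `¬(¬α ∨ ¬β)`. -/
def Form.and (φ ψ : Form) : Form := .not (.or (.not φ) (.not ψ))

/-- `α → β` abbreviates `¬α ∨ β`. -/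
def Form.imp (φ ψ : Form) : Form := .or (.not φ) ψ

/-- A formula is (syntactically) a clause iff it is a disjunction of literals. -/
def Form.isClause : Form → Bool
  | .atom _ _ => true
  | .not (.atom _ _) => true
  | .not _ => false
  | .or φ ψ => φ.isClause && ψ.isClause

/-- The set of literals of a clause-formula. -/
def Form.lits : Form → Clause
  | .atom t n => {Lit.pos t n}
  | .not (.atom t n) => {Lit.neg t n}
  | .not _ => ∅
  | .or φ ψ => φ.lits ∪ ψ.lits

/-- The limited-belief truth relation `s ⊨ˢ α` for objective formulas:
a clause is true iff it is in `UP(s)`; a non-clause disjunction is true iff one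
of its disjuncts is; `¬(α ∨ β)` is true iff `¬α` and `¬β` are; `¬¬α` is true
iff `α` is. -/
def sat (s : Set Clause) : Form → Prop
  | .atom t n => UP s {Lit.pos t n}
  | .not (.atom t n) => UP s {Lit.neg t n}
  | .not (.not φ) => sat s φ
  | .not (.or φ ψ) => sat s (.not φ) ∧ sat s (.not ψ)
  | .or φ ψ => if (Form.or φ ψ).isClause then UP s (Form.or φ ψ).lits
               else sat s φ ∨ sat s ψ

/-- `satB s k α` is `s ⊨ˢ B_k α`: `B₀ α` holds iff `α` does, and `B_{k+1} α`
holds iff for some function term `t`, for all names `n`,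
`s ∪ {t ≈ n} ⊨ˢ B_k α`. -/
def satB (s : Set Clause) : ℕ → Form → Prop
  | 0, φ => sat s φ
  | k+1, φ => ∃ t : FnTerm, ∀ n : Name, satB (s ∪ {({Lit.pos t n} : Clause)}) k φ

/-- A world maps function terms to standard names. -/
abbrev World := FnTerm → Name

/-- Classical truth of a literal in a world. -/
def Lit.holds (w : World) : Lit → Prop
  | .pos t n => w t = n
  | .neg t n => w t ≠ n

/-- Classical truth of a clause in a world. -/
def Clause.holds (w : World) (c : Clause) : Prop := ∃ ℓ ∈ c, ℓ.holds w

/-- Classical truth of an objective formula in a world. -/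
def wsat (w : World) : Form → Prop
  | .atom t n => w t = n
  | .not φ => ¬ wsat w φ
  | .or φ ψ => wsat w φ ∨ wsat w ψ

/-- Classical entailment `s ⊨ α`. -/
def entails (s : Set Clause) (φ : Form) : Prop :=
  ∀ w : World, (∀ c ∈ s, c.holds w) → wsat w φ

/-- Classical entailment of a clause (disjunction of its literals). -/
def entailsClause (s : Set Clause) (c : Clause) : Prop :=
  ∀ w : World, (∀ c' ∈ s, c'.holds w) → c.holds w

/-- Function terms mentioned in a formula. -/
def Form.terms : Form → Finset FnTerm
  | .atom t _ => {t}
  | .not φ => φ.terms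
  | .or φ ψ => φ.terms ∪ ψ.terms

/-- Standard names mentioned in a formula. -/
def Form.names : Form → Finset Name
  | .atom t n => insert n t.args.toFinset
  | .not φ => φ.names
  | .or φ ψ => φ.names ∪ ψ.names

/-- Propositional formulas in negation normal form (negation only in front of
variables). -/
inductive PProp where
  | var (i : ℕ)
  | nvar (i : ℕ)
  | conj (φ ψ : PProp)
  | disj (φ ψ : PProp)

/-- Propositional evaluation. -/
def PProp.eval (v : ℕ → Bool) : PProp → Bool
  | .var i => v i
  | .nvar i => !(v i)
  | .conj φ ψ => φ.eval v && ψ.eval v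
  | .disj φ ψ => φ.eval v || ψ.eval v

/-- Variables mentioned in a propositional formula. -/
def PProp.propVars : PProp → Finset ℕ
  | .var i => {i}
  | .nvar i => {i}
  | .conj φ ψ => φ.propVars ∪ ψ.propVars
  | .disj φ ψ => φ.propVars ∪ ψ.propVars

/-- Truth of the quantified Boolean formula `Q_i x_i … Q₁ x₁ ψ` under a partial
assignment `v` of the remaining variables; `Q i = true` means `x_i` is
universally quantified, `Q i = false` means it is existentially quantified. -/
def qbfEval (Q : ℕ → Bool) (ψ : PProp) : ℕ → (ℕ → Bool) → Prop
  | 0, v => ψ.eval v = true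
  | i + 1, v =>
      if Q (i + 1) then ∀ b : Bool, qbfEval Q ψ i (Function.update v (i + 1) b)
      else ∃ b : Bool, qbfEval Q ψ i (Function.update v (i + 1) b)

/-- The translation `∗` from the QBF matrix to objective formulas:
`x_i∗ = f_i ≈ T`; `(¬x_i)∗` is `f_i ≉ T` if `x_i` is universal and `f'_i ≈ T`
if it is existential; `∗` commutes with `∨` and `∧`. -/
def qbfTrans (Q : ℕ → Bool) (f f' : ℕ → FnTerm) (T : Name) : PProp → Form
  | .var i => .atom (f i) T
  | .nvar i => if Q i then .not (.atom (f i) T) else .atom (f' i) T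
  | .conj φ ψ => Form.and (qbfTrans Q f f' T φ) (qbfTrans Q f f' T ψ)
  | .disj φ ψ => Form.or (qbfTrans Q f f' T φ) (qbfTrans Q f f' T ψ)

/-- The alternating chain `∃ t_i ∈ F_i, ∀ n_i ∈ N_i, …, ∃ t₁ ∈ F₁, ∀ n₁ ∈ N₁,
P (s ∪ {t₁ ≈ n₁, …, t_i ≈ n_i})`. -/
def chainSet (F : ℕ → Set FnTerm) (N : ℕ → Set Name) (P : Set Clause → Prop) :
    ℕ → Set Clause → Prop
  | 0, s => P s
  | i + 1, s => ∃ t ∈ F (i + 1), ∀ n ∈ N (i + 1),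
      chainSet F N P i (s ∪ {({Lit.pos t n} : Clause)})

/-- `t ≈ n` is the unit added for variable `j` under the assignment `v`. -/
def QValid (Q : ℕ → Bool) (f f' : ℕ → FnTerm) (T : Name) (v : ℕ → Bool)
    (j : ℕ) (t : FnTerm) (n : Name) : Prop :=
  (Q j = true → t = f j ∧ (v j = true ↔ n = T)) ∧
  (Q j = false → n = T ∧ t = if v j then f j else f' j)

structure QInv (k : ℕ) (Q : ℕ → Bool) (f f' : ℕ → FnTerm) (T : Name)
    (i : ℕ) (s : Set Clause) (v : ℕ → Bool) : Prop where
  shape : ∀ c ∈ s, ∃ j t n, i < j ∧ j ≤ k ∧ QValid Q f f' T v j t n ∧ c = {Lit.pos t n}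
  ex : ∀ j, i < j → j ≤ k → ∃ t n, QValid Q f f' T v j t n ∧ ({Lit.pos t n} : Clause) ∈ s
  cons : ∀ t n m, ({Lit.pos t n} : Clause) ∈ s → ({Lit.pos t m} : Clause) ∈ s → n = m

/-- A literal is directly supported by the units of `s`. -/
def litSup (s : Set Clause) : Lit → Prop
  | .pos t n => ({Lit.pos t n} : Clause) ∈ s
  | .neg t n => ∃ n', n' ≠ n ∧ ({Lit.pos t n'} : Clause) ∈ s

theorem UP_iff (s : Set Clause) (h1 : ∀ c ∈ s, ∃ t n, c = {Lit.pos t n})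
    (h2 : ∀ t n n', ({Lit.pos t n} : Clause) ∈ s → ({Lit.pos t n'} : Clause) ∈ s → n = n')
    (c : Clause) : UP s c ↔ ∃ l ∈ c, litSup s l := by
  constructor
  · intro h
    induction h with
    | mem hc =>
      obtain ⟨t, n, rfl⟩ := h1 _ hc
      exact ⟨_, Finset.mem_singleton_self _, hc⟩
    | @unit c l _ _ ih1 ih2 =>
      obtain ⟨l1, hl1, hs1⟩ := ih1
      obtain ⟨l2, hl2, hs2⟩ := ih2
      rw [Finset.mem_singleton] at hl1
      subst hl1
      refine ⟨l2, ?_, hs2⟩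
      simp only [Clause.prop, Finset.mem_filter]
      refine ⟨hl2, ?_⟩
      by_contra hne
      cases l1 with
      | pos t n =>
        cases l2 with
        | pos t' n' =>
          simp [Lit.complementary] at hne
          obtain ⟨rfl, hn⟩ := hne
          exact hn (h2 _ _ _ hs2 hs1)
        | neg t' n' =>
          simp [Lit.complementary] at hne
          obtain ⟨rfl, rfl⟩ := hne
          obtain ⟨m, hm, hms⟩ := hs2
          exact hm (h2 _ _ _ hms hs1)
      | neg t n =>
        cases l2 with
        | pos t' n' =>
          simp [Lit.complementary] at hne
          obtain ⟨rfl, rfl⟩ := hne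
          obtain ⟨m, hm, hms⟩ := hs1
          exact hm (h2 _ _ _ hms hs2)
        | neg t' n' => simp [Lit.complementary] at hne
    | sub _ hsub ih =>
      obtain ⟨l, hl, hs⟩ := ih
      cases l with
      | pos t n =>
        rcases hsub.1 t n hl with h | ⟨n', hn', h⟩
        · exact ⟨_, h, hs⟩
        · exact ⟨_, h, n, hn'.symm, hs⟩
      | neg t n => exact ⟨_, hsub.2 t n hl, hs⟩
  · rintro ⟨l, hl, hs⟩
    cases l with
    | pos t n =>
      refine UP.sub (UP.mem hs) ⟨?_, ?_⟩
      · intro t' n' h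
        rw [Finset.mem_singleton] at h
        cases h
        exact Or.inl hl
      · intro t' n' h
        simp at h
    | neg t n =>
      obtain ⟨m, hm, hms⟩ := hs
      refine UP.sub (UP.mem hms) ⟨?_, ?_⟩
      · intro t' n' h
        rw [Finset.mem_singleton] at h
        cases h
        exact Or.inr ⟨n, hm.symm, hl⟩
      · intro t' n' h
        simp at h

theorem sat_and (s : Set Clause) (a b : Form) : sat s (Form.and a b) ↔ sat s a ∧ sat s b := by
  simp [Form.and, sat]

theorem sat_clause (s : Set Clause) (a : Form) (h : a.isClause = true) :
    sat s a ↔ UP s a.lits := by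
  cases a with
  | atom t n => simp [sat, Form.lits]
  | not a =>
    cases a with
    | atom t n => simp [sat, Form.lits]
    | not a => simp [Form.isClause] at h
    | or a b => simp [Form.isClause] at h
  | or a b => rw [sat, if_pos h]

theorem sat_or (s : Set Clause) (h1 : ∀ c ∈ s, ∃ t n, c = {Lit.pos t n})
    (h2 : ∀ t n n', ({Lit.pos t n} : Clause) ∈ s → ({Lit.pos t n'} : Clause) ∈ s → n = n')
    (a b : Form) : sat s (Form.or a b) ↔ sat s a ∨ sat s b := by
  by_cases h : (Form.or a b).isClause = true
  · have h' := h
    simp only [Form.isClause, Bool.and_eq_true] at h'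
    rw [sat_clause s _ h, sat_clause s _ h'.1, sat_clause s _ h'.2, UP_iff s h1 h2,
      UP_iff s h1 h2, UP_iff s h1 h2]
    simp only [Form.lits, Finset.mem_union]
    constructor
    · rintro ⟨l, hl | hl, hs⟩
      · exact Or.inl ⟨l, hl, hs⟩
      · exact Or.inr ⟨l, hl, hs⟩
    · rintro (⟨l, hl, hs⟩ | ⟨l, hl, hs⟩)
      · exact ⟨l, Or.inl hl, hs⟩
      · exact ⟨l, Or.inr hl, hs⟩
  · rw [sat, if_neg h]

theorem sat_trans (k : ℕ) (Q : ℕ → Bool) (T : Name) (f f' : ℕ → FnTerm)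
    (hdist : ∀ i ∈ Finset.Icc 1 k, ∀ j ∈ Finset.Icc 1 k,
      (i ≠ j → f i ≠ f j) ∧ (i ≠ j → f' i ≠ f' j) ∧ f i ≠ f' j)
    (s : Set Clause) (v : ℕ → Bool) (hI : QInv k Q f f' T 0 s v)
    (ψ : PProp) (hψ : ψ.propVars ⊆ Finset.Icc 1 k) :
    ψ.eval v = true ↔ sat s (qbfTrans Q f f' T ψ) := by
  have h1 : ∀ c ∈ s, ∃ t n, c = {Lit.pos t n} := fun c hc => by
    obtain ⟨j, t, n, -, -, -, h⟩ := hI.shape c hc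
    exact ⟨t, n, h⟩
  have h2 := hI.cons
  -- decode a unit of `s`
  have dec : ∀ t n, ({Lit.pos t n} : Clause) ∈ s →
      ∃ j, j ∈ Finset.Icc 1 k ∧ QValid Q f f' T v j t n := by
    intro t n h
    obtain ⟨j, t', n', hj, hjk, hv, he⟩ := hI.shape _ h
    rw [Finset.singleton_inj] at he
    cases he
    exact ⟨j, Finset.mem_Icc.2 ⟨hj, hjk⟩, hv⟩
  have decf : ∀ i ∈ Finset.Icc 1 k, ∀ n, ({Lit.pos (f i) n} : Clause) ∈ s →
      (v i = true ↔ n = T) := by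
    intro i hi n h
    obtain ⟨j, hj, hv⟩ := dec _ _ h
    have hd := hdist i hi j hj
    cases hQ : Q j with
    | true =>
      obtain ⟨ht, hb⟩ := hv.1 hQ
      have : i = j := by
        by_contra hne
        exact hd.1 hne ht
      subst this
      exact hb
    | false =>
      obtain ⟨hn, ht⟩ := hv.2 hQ
      cases hvj : v j with
      | true =>
        simp only [hvj, if_true] at ht
        have : i = j := by
          by_contra hne
          exact hd.1 hne ht
        subst this
        simp [hvj, hn]
      | false =>
        simp [hvj] at ht
        exact absurd ht hd.2.2
  have decf' : ∀ i ∈ Finset.Icc 1 k, ∀ n, ({Lit.pos (f' i) n} : Clause) ∈ s →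
      v i = false := by
    intro i hi n h
    obtain ⟨j, hj, hv⟩ := dec _ _ h
    have hd := hdist i hi j hj
    have hd' := hdist j hj i hi
    cases hQ : Q j with
    | true => exact absurd (hv.1 hQ).1.symm hd'.2.2
    | false =>
      obtain ⟨hn, ht⟩ := hv.2 hQ
      cases hvj : v j with
      | true =>
        simp only [hvj, if_true] at ht
        exact absurd ht.symm hd'.2.2
      | false =>
        simp [hvj] at ht
        have : i = j := by
          by_contra hne
          exact hd.2.1 hne ht
        subst this
        exact hvj
  induction ψ with
  | var i =>
    have hi : i ∈ Finset.Icc 1 k := hψ (by simp [PProp.propVars])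
    have hi' := Finset.mem_Icc.1 hi
    simp only [PProp.eval, qbfTrans, sat]
    rw [UP_iff s h1 h2]
    simp only [Finset.mem_singleton, exists_eq_left, litSup]
    constructor
    · intro hv
      obtain ⟨t, n, hV, hs⟩ := hI.ex i hi'.1 hi'.2
      cases hQ : Q i with
      | true =>
        obtain ⟨rfl, hb⟩ := hV.1 hQ
        rwa [hb.1 hv] at hs
      | false =>
        obtain ⟨rfl, ht⟩ := hV.2 hQ
        simp only [hv, if_true] at ht
        rwa [ht] at hs
    · intro h
      exact (decf i hi T h).2 rfl
  | nvar i =>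
    have hi : i ∈ Finset.Icc 1 k := hψ (by simp [PProp.propVars])
    have hi' := Finset.mem_Icc.1 hi
    obtain ⟨t, n, hV, hs⟩ := hI.ex i hi'.1 hi'.2
    simp only [PProp.eval, qbfTrans, Bool.not_eq_true']
    cases hQ : Q i with
    | true =>
      simp only [if_true, sat]
      rw [UP_iff s h1 h2]
      simp only [Finset.mem_singleton, exists_eq_left, litSup]
      obtain ⟨rfl, hb⟩ := hV.1 hQ
      constructor
      · intro hv
        refine ⟨n, fun hn => ?_, hs⟩
        rw [hb.2 hn] at hv
        cases hv
      · rintro ⟨m, hm, hms⟩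
        have := decf i hi m hms
        cases hv : v i with
        | true => exact absurd (this.1 hv) hm
        | false => rfl
    | false =>
      simp only [Bool.false_eq_true, if_false, sat]
      rw [UP_iff s h1 h2]
      simp only [Finset.mem_singleton, exists_eq_left, litSup]
      obtain ⟨rfl, ht⟩ := hV.2 hQ
      constructor
      · intro hv
        simp [hv] at ht
        rwa [ht] at hs
      · intro h
        exact decf' i hi _ h
  | conj a b iha ihb =>
    simp only [PProp.propVars] at hψ
    simp only [PProp.eval, qbfTrans, Bool.and_eq_true]
    rw [sat_and]
    exact and_congr (iha (Finset.union_subset_left hψ)) (ihb (Finset.union_subset_right hψ))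
  | disj a b iha ihb =>
    simp only [PProp.propVars] at hψ
    simp only [PProp.eval, qbfTrans, Bool.or_eq_true]
    rw [sat_or s h1 h2]
    exact or_congr (iha (Finset.union_subset_left hψ)) (ihb (Finset.union_subset_right hψ))

theorem QInv.step {k : ℕ} {Q : ℕ → Bool} {T : Name} {f f' : ℕ → FnTerm}
    (hdist : ∀ i ∈ Finset.Icc 1 k, ∀ j ∈ Finset.Icc 1 k,
      (i ≠ j → f i ≠ f j) ∧ (i ≠ j → f' i ≠ f' j) ∧ f i ≠ f' j)
    {i : ℕ} (hi : i + 1 ≤ k)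
    {s : Set Clause} {v : ℕ → Bool} (hI : QInv k Q f f' T (i + 1) s v)
    (b : Bool) (t : FnTerm) (n : Name)
    (hV : QValid Q f f' T (Function.update v (i + 1) b) (i + 1) t n) :
    QInv k Q f f' T i (s ∪ {({Lit.pos t n} : Clause)}) (Function.update v (i + 1) b) := by
  have old : ∀ j t n, i + 1 < j → (QValid Q f f' T (Function.update v (i + 1) b) j t n ↔
      QValid Q f f' T v j t n) := by
    intro j t n hj
    have : j ≠ i + 1 := by omega
    simp [QValid, Function.update_of_ne this]
  have form : ∀ v j t n, QValid Q f f' T v j t n → t = f j ∨ t = f' j := by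
    intro v j t n h
    cases hQ : Q j with
    | true => exact Or.inl (h.1 hQ).1
    | false =>
      have := (h.2 hQ).2
      cases hv : v j with
      | true => left; simpa [hv] using this
      | false => right; simpa [hv] using this
  have fresh : ∀ n', ({Lit.pos t n'} : Clause) ∉ s := by
    intro n' h
    obtain ⟨j, t', m, hj, hjk, hv, he⟩ := hI.shape _ h
    rw [Finset.singleton_inj] at he
    cases he
    have ha : i + 1 ∈ Finset.Icc 1 k := Finset.mem_Icc.2 ⟨by omega, hi⟩
    have hb : j ∈ Finset.Icc 1 k := Finset.mem_Icc.2 ⟨by omega, hjk⟩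
    have hne : i + 1 ≠ j := by omega
    have d1 := hdist _ ha _ hb
    have d2 := hdist _ hb _ ha
    rcases form _ _ _ _ hv with e | e <;> rcases form _ _ _ _ hV with e' | e'
    · exact d1.1 hne (e'.symm.trans e)
    · exact d2.2.2 (e.symm.trans e')
    · exact d1.2.2 (e'.symm.trans e)
    · exact d1.2.1 hne (e'.symm.trans e)
  refine ⟨?_, ?_, ?_⟩
  · rintro c (hc | hc)
    · obtain ⟨j, t', m, hj, hjk, hv, he⟩ := hI.shape _ hc
      exact ⟨j, t', m, by omega, hjk, (old _ _ _ hj).2 hv, he⟩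
    · exact ⟨i + 1, t, n, by omega, hi, hV, hc⟩
  · intro j hj hjk
    rcases Nat.eq_or_lt_of_le (show i + 1 ≤ j from hj) with h | h
    · subst h
      exact ⟨t, n, hV, Or.inr rfl⟩
    · obtain ⟨t', m, hv, hs⟩ := hI.ex j h hjk
      exact ⟨t', m, (old _ _ _ h).2 hv, Or.inl hs⟩
  · rintro t' m m' (h | h) (h' | h')
    · exact hI.cons _ _ _ h h'
    · rw [Set.mem_singleton_iff, Finset.singleton_inj] at h'
      cases h'
      exact absurd h (fresh _)
    · rw [Set.mem_singleton_iff, Finset.singleton_inj] at h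
      cases h
      exact absurd h' (fresh _)
    · rw [Set.mem_singleton_iff, Finset.singleton_inj] at h h'
      cases h
      cases h'
      rfl

theorem fresh_name (a b : ℕ) : a + b + 1 ≠ a ∧ a + b + 1 ≠ b := by omega

theorem qbf_main (k : ℕ) (Q : ℕ → Bool) (ψ : PProp)
    (hψ : ψ.propVars ⊆ Finset.Icc 1 k)
    (T W : Name) (hTW : T ≠ W)
    (f f' : ℕ → FnTerm)
    (hdist : ∀ i ∈ Finset.Icc 1 k, ∀ j ∈ Finset.Icc 1 k,
      (i ≠ j → f i ≠ f j) ∧ (i ≠ j → f' i ≠ f' j) ∧ f i ≠ f' j) (i : ℕ) :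
    ∀ (s : Set Clause) (v : ℕ → Bool), i ≤ k → QInv k Q f f' T i s v →
    (qbfEval Q ψ i v ↔
      chainSet
        (fun i => if Q i then ({f i} : Set FnTerm) else {f i, f' i})
        (fun i => if Q i then ({n : Name | n ≠ W} : Set Name) else {T})
        (fun s => sat s (qbfTrans Q f f' T ψ))
        i s) := by
  induction i with
  | zero =>
    intro s v _ hI
    exact sat_trans k Q T f f' hdist s v hI ψ hψ
  | succ i ih =>
    intro s v hi hI
    have key := fun b t n hV => ih _ _ (by omega) (hI.step hdist hi b t n hV)
    rw [qbfEval, chainSet]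
    cases hQ : Q (i + 1) with
    | true =>
      simp only [if_true, Set.mem_singleton_iff, exists_eq_left, Set.mem_ofPred_eq]
      constructor
      · intro h n _
        refine (key (decide (n = T)) _ n ?_).1 (h _)
        simp [QValid, hQ]
      · intro h b
        cases b with
        | true =>
          refine (key true _ T ?_).2 (h T hTW)
          simp [QValid, hQ]
        | false =>
          have hT : T + W + 1 ≠ T := (fresh_name T W).1
          refine (key false _ (T + W + 1) ?_).2 (h _ (fresh_name T W).2)
          simp only [QValid, hQ, Function.update_self]
          simp [hT]
    | false =>
      simp only [Bool.false_eq_true, if_false, Set.mem_singleton_iff, forall_eq,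
        Set.mem_insert_iff]
      constructor
      · rintro ⟨b, h⟩
        cases b with
        | true =>
          refine ⟨_, Or.inl rfl, (key true _ T ?_).1 h⟩
          simp [QValid, hQ]
        | false =>
          refine ⟨_, Or.inr rfl, (key false _ T ?_).1 h⟩
          simp [QValid, hQ]
      · rintro ⟨t, rfl | rfl, h⟩
        · refine ⟨true, (key true _ T ?_).2 h⟩
          simp [QValid, hQ]
        · refine ⟨false, (key false _ T ?_).2 h⟩
          simp [QValid, hQ]

/-- **Correctness of the QBF reduction** (Theorem 8, hardness): the quantified
Boolean formula `Q_k x_k … Q₁ x₁ ψ` evaluates to TRUE iff for some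
`t_k ∈ F_k`, for all `n_k ∈ N_k`, …, for some `t₁ ∈ F₁`, for all `n₁ ∈ N₁`,
`{t₁ ≈ n₁, …, t_k ≈ n_k} ⊨ˢ ψ∗`, where `F_i = {f_i}` and `N_i` is the set of
names distinct from `W` if `Q_i = ∀`, and `F_i = {f_i, f'_i}` and `N_i = {T}`
if `Q_i = ∃`. -/
theorem qbf_reduction (k : ℕ) (Q : ℕ → Bool) (ψ : PProp)
    (hψ : ψ.propVars ⊆ Finset.Icc 1 k)
    (T W : Name) (hTW : T ≠ W)
    (f f' : ℕ → FnTerm)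
    (hdist : ∀ i ∈ Finset.Icc 1 k, ∀ j ∈ Finset.Icc 1 k,
      (i ≠ j → f i ≠ f j) ∧ (i ≠ j → f' i ≠ f' j) ∧ f i ≠ f' j) :
    qbfEval Q ψ k (fun _ => false) ↔
      chainSet
        (fun i => if Q i then ({f i} : Set FnTerm) else {f i, f' i})
        (fun i => if Q i then ({n : Name | n ≠ W} : Set Name) else {T})
        (fun s => sat s (qbfTrans Q f f' T ψ))
        k (∅ : Set Clause) := by
  refine qbf_main k Q ψ hψ T W hTW f f' hdist k _ _ le_rfl ⟨?_, ?_, ?_⟩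
  · intro c hc
    exact absurd hc (Set.notMem_empty _)
  · intro j h1 h2
    omega
  · intro t n n' h
    exact absurd h (Set.notMem_empty _)
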